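/- Let (mₖ)_{k ≥ 1} be a strictly increasing sequence of integers with m₁ ≥ 0 such that for each k ≥ 1: mₖ + k is odd, mₖ + 1 ≥ k², and mₖ₊₁ − 1 < ((k+1)²/k²)·(mₖ + 1). Then for every k ≥ 1 and every integer m with mₖ ≤ m < mₖ₊₁ − 1 one has P(S_{m₂−1} = 0) = P_{m₂−1}(0) < P_{m₃−1}(1) < ⋯ < P_{mₖ−1}(k−2) < P_{mₖ₊₁−1}(k−1) < P_m(k); in particular the sequence k ↦ P_{mₖ₊₁−1}(k−1) is strictly increasing. -/

import Mathlib

/-!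
Write `q n = P(Sₙ = b)` with `b = k + 1`, and let `n ≡ k - 1 (mod 2)`.  One more sign together with
one more unit of threshold gains `P (n+1) k = P n (k-1) + q n` (`P_gain`), after which each pair of
further signs loses `(b / M) * q M`, where `M = n + 2, n + 4, …` (`P_loss`).  Both follow from
conditioning on one sign and from the ratio of neighbouring binomial weights (`prEq_ratio`).

Since losses are positive, `P n k` decreases along parity classes of `n` (`P_anti`); with the gain
formula and the parity of `Sₙ` this yields the last inequality of the chain.

For the strict increase along the sequence, the total loss up to time `N` must stay below `q n`.  The
condition `n + 2 ≥ b²` says exactly that `q` is past its maximum, so `q M ≤ q n` (`prEq_anti`), and it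
remains to see that the sum of `b / M` is less than `1`.  It is at most `(b/2) log (N / (n+1))`
(`P_lower`), and `N / (n+1) < exp (2/b)` follows from `N < ((b+1)/b)² (n+2)`, `n + 2 ≥ b²` and the
parities of `N` and `n` (`ratio_lt_exp`).
-/

/-- Probability of an event under the uniform distribution on sign vectors
`{-1,1}^n` (encoded as `Fin n → Bool`), which is the joint law of `n`
independent Rademacher random variables. -/
noncomputable def pr (n : ℕ) (E : (Fin n → Bool) → Prop) : ℝ :=
  letI := Classical.decPred E
  ((Finset.univ.filter E).card : ℝ) / 2 ^ n

/-- `S n ε = ε₁ + ⋯ + εₙ`, the sum of `n` Rademacher variables. -/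
def S (n : ℕ) (ε : Fin n → Bool) : ℤ := ∑ i, if ε i then 1 else -1

/-- `P n k = P(|Sₙ| ≤ k)` (with an integer threshold, so `P n (-1) = 0`). -/
noncomputable def P (n : ℕ) (k : ℤ) : ℝ := pr n fun ε => |S n ε| ≤ k

/-- `prEq n j = P(Sₙ = j)`. -/
noncomputable def prEq (n : ℕ) (j : ℤ) : ℝ := pr n fun ε => S n ε = j

/-- `Pxi ξ n = P(|Sₙ| ≤ ξ·√n)`. -/
noncomputable def Pxi (ξ : ℝ) (n : ℕ) : ℝ :=
  pr n fun ε => (|S n ε| : ℝ) ≤ ξ * Real.sqrt n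

/-- `nseq ξ k = nₖ = 2·⌈(k²/ξ² + k)/2⌉ − k − 1`. -/
noncomputable def nseq (ξ : ℝ) (k : ℕ) : ℤ :=
  2 * ⌈((k : ℝ) ^ 2 / ξ ^ 2 + (k : ℝ)) / 2⌉ - k - 1

/-! ### One-step recursions -/

/-- Conditioning on the first sign. -/
lemma pr_succ (n : ℕ) (E : (Fin (n + 1) → Bool) → Prop) :
    pr (n + 1) E = (pr n (fun ε => E (Fin.cons true ε)) + pr n (fun ε => E (Fin.cons false ε))) / 2 := by
  classical
  have key : (Finset.univ.filter E).card =
      (Finset.univ.filter (fun ε : Fin n → Bool => E (Fin.cons true ε))).card +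
      (Finset.univ.filter (fun ε : Fin n → Bool => E (Fin.cons false ε))).card := by
    simp only [Finset.card_filter]
    rw [← (Fin.consEquiv (fun _ : Fin (n + 1) => Bool)).sum_comp, Fintype.sum_prod_type]
    simp only [Fintype.sum_bool]
    rfl
  unfold pr
  have key' : ((Finset.univ.filter E).card : ℝ) =
      ((Finset.univ.filter (fun ε : Fin n → Bool => E (Fin.cons true ε))).card : ℝ) +
      ((Finset.univ.filter (fun ε : Fin n → Bool => E (Fin.cons false ε))).card : ℝ) := by
    exact_mod_cast key
  convert congrArg (· / (2 : ℝ) ^ (n + 1)) key' using 1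
  rw [pow_succ]
  ring

lemma S_cons (n : ℕ) (b : Bool) (ε : Fin n → Bool) :
    S (n + 1) (Fin.cons b ε) = (if b then 1 else -1) + S n ε := by
  simp [S, Fin.sum_univ_succ]

lemma pr_congr (n : ℕ) {E F : (Fin n → Bool) → Prop} (h : ∀ ε, E ε ↔ F ε) : pr n E = pr n F := by
  have : E = F := funext fun ε => propext (h ε)
  rw [this]

lemma pr_nonneg (n : ℕ) (E : (Fin n → Bool) → Prop) : 0 ≤ pr n E := by
  unfold pr; positivity

lemma pr_or (n : ℕ) {E F : (Fin n → Bool) → Prop} (h : ∀ ε, ¬ (E ε ∧ F ε)) :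
    pr n (fun ε => E ε ∨ F ε) = pr n E + pr n F := by
  classical
  have key : (Finset.univ.filter (fun ε => E ε ∨ F ε)).card =
      (Finset.univ.filter E).card + (Finset.univ.filter F).card := by
    rw [Finset.filter_or, Finset.card_union_of_disjoint]
    rw [Finset.disjoint_filter]
    exact fun ε _ h1 h2 => h ε ⟨h1, h2⟩
  unfold pr
  rw [← add_div]
  congr 1
  convert congrArg (Nat.cast : ℕ → ℝ) key using 1
  · congr!
  · push_cast
    rfl

lemma S_parity (n : ℕ) (ε : Fin n → Bool) : (S n ε - n) % 2 = 0 := by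
  induction n with
  | zero => simp [S]
  | succ n ih =>
    rw [← Fin.cons_self_tail ε, S_cons]
    have := ih (Fin.tail ε)
    push_cast
    split_ifs <;> omega

lemma prEq_succ (n : ℕ) (j : ℤ) :
    prEq (n + 1) j = (prEq n (j - 1) + prEq n (j + 1)) / 2 := by
  unfold prEq
  rw [pr_succ]
  congr 2 <;> refine pr_congr n fun ε => ?_ <;> rw [S_cons] <;> simp <;> omega

lemma prEq_zero (j : ℤ) : prEq 0 j = if j = 0 then 1 else 0 := by
  unfold prEq pr S
  by_cases h : j = 0
  · simp [h]
  · have : ¬ (0 = j) := fun h' => h h'.symm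
    simp [h, this]

lemma prEq_nonneg (n : ℕ) (j : ℤ) : 0 ≤ prEq n j := pr_nonneg _ _

lemma prEq_neg (n : ℕ) (j : ℤ) : prEq n (-j) = prEq n j := by
  induction n generalizing j with
  | zero => simp [prEq_zero]
  | succ n ih =>
    rw [prEq_succ, prEq_succ, ← ih (j - 1), ← ih (j + 1)]
    rw [show -(j - 1) = -j + 1 by ring, show -(j + 1) = -j - 1 by ring]
    ring

lemma prEq_pos (n : ℕ) (j : ℤ) (hp : (j - n) % 2 = 0) (hj : |j| ≤ n) : 0 < prEq n j := by
  induction n generalizing j with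
  | zero =>
    have : j = 0 := by simpa using hj
    simp [prEq_zero, this]
  | succ n ih =>
    rw [prEq_succ]
    rw [abs_le] at hj
    push_cast at hj hp
    have h1 := prEq_nonneg n (j - 1)
    have h2 := prEq_nonneg n (j + 1)
    rcases le_or_gt j 0 with h | h
    · have := ih (j + 1) (by omega) (by rw [abs_le]; omega)
      linarith
    · have := ih (j - 1) (by omega) (by rw [abs_le]; omega)
      linarith

/-! ### Exact relations between binomial weights -/

/-- The ratio of neighbouring binomial weights, `C(n, i+1) / C(n, i) = (n - i) / (i + 1)`, cleared of
denominators so that it holds for every integer `j`, whatever its size or parity. -/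
lemma prEq_ratio (n : ℕ) (j : ℤ) :
    ((n : ℝ) - j) * prEq n j = (n + j + 2) * prEq n (j + 2) := by
  induction n generalizing j with
  | zero =>
    rw [prEq_zero, prEq_zero]
    by_cases h : j = 0
    · simp [h]
    · by_cases h' : j + 2 = 0
      · have : (j : ℝ) + 2 = 0 := by exact_mod_cast h'
        simp [h, this]
      · simp [h, h']
  | succ n ih =>
    have a := ih (j - 1)
    have b := ih (j + 1)
    rw [prEq_succ, prEq_succ]
    rw [show j - 1 + 2 = j + 1 by ring] at a
    rw [show j + 2 - 1 = j + 1 by ring, show j + 2 + 1 = j + 1 + 2 by ring]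
    push_cast at a b ⊢
    linarith

lemma prEq_up (n : ℕ) (j : ℤ) :
    ((n : ℝ) + j + 2) * prEq (n + 1) (j + 1) = (n + 1) * prEq n j := by
  have a := prEq_ratio n j
  rw [prEq_succ, show j + 1 - 1 = j by ring, show j + 1 + 1 = j + 2 by ring]
  linarith

lemma prEq_down (n : ℕ) (j : ℤ) :
    ((n : ℝ) - j) * prEq (n + 1) (j + 1) = (n + 1) * prEq n (j + 2) := by
  have a := prEq_ratio n j
  rw [prEq_succ, show j + 1 - 1 = j by ring, show j + 1 + 1 = j + 2 by ring]
  linarith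

lemma prEq_two_step (n : ℕ) (b : ℤ) :
    ((n : ℝ) + 2 + b) * (n + 2 - b) * prEq (n + 2) b = (n + 2) * (n + 1) * prEq n b := by
  have a := prEq_up (n + 1) (b - 1)
  have c := prEq_down n (b - 2)
  rw [show b - 1 + 1 = b by ring] at a
  rw [show b - 2 + 1 = b - 1 by ring, show b - 2 + 2 = b by ring] at c
  push_cast at a c
  linear_combination ((n : ℝ) + 2 - b) * a + (n + 2) * c

/-- `n ↦ P(Sₙ = b)` peaks, along a parity class, at `n + 2 ≈ b²` and decreases afterwards. -/
lemma prEq_anti (n b : ℕ) (hb : 2 ≤ b) (h : b ^ 2 ≤ n + 2) :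
    prEq (n + 2) b ≤ prEq n b := by
  have a := prEq_two_step n b
  have h' : (b : ℝ) ^ 2 ≤ n + 2 := by exact_mod_cast h
  have hb' : (2 : ℝ) ≤ b := by exact_mod_cast hb
  push_cast at a
  have hp : 0 < ((n : ℝ) + 2 + b) * (n + 2 - b) := by
    apply mul_pos <;> nlinarith
  have hq := prEq_nonneg n b
  refine le_of_mul_le_mul_left ?_ hp
  rw [a]
  apply mul_le_mul_of_nonneg_right _ hq
  nlinarith

lemma prEq_anti_iter (n b : ℕ) (hb : 2 ≤ b) (h : b ^ 2 ≤ n + 2) (r : ℕ) :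
    prEq (n + 2 * r) b ≤ prEq n b := by
  induction r with
  | zero => simp
  | succ r ih => exact (prEq_anti (n + 2 * r) b hb (by omega)).trans ih

/-! ### How `P n k` changes with `n` -/

lemma P_succ (n k : ℕ) (h : n % 2 = (k + 1) % 2) :
    P (n + 1) k = (P n (k + 1) + P n (k - 1)) / 2 := by
  -- Counting with multiplicity, the intervals `[-k-1, k-1]` and `[1-k, k+1]` cover the same points
  -- as their union and intersection; for `k = 0` the union misses `0`, which parity excludes.
  unfold P
  rw [pr_succ]
  have e1 : pr n (fun ε => |S (n + 1) (Fin.cons true ε)| ≤ (k : ℤ)) =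
      pr n (fun ε => |S n ε| ≤ (k : ℤ) - 1) + pr n (fun ε => S n ε = -(k : ℤ) - 1) := by
    rw [← pr_or]
    · refine pr_congr n fun ε => ?_
      have := S_parity n ε
      rw [S_cons, abs_le, abs_le]
      simp only [if_true]
      omega
    · intro ε
      rw [abs_le]
      omega
  have e2 : pr n (fun ε => |S n ε| ≤ (k : ℤ) + 1) =
      pr n (fun ε => |S (n + 1) (Fin.cons false ε)| ≤ (k : ℤ)) +
        pr n (fun ε => S n ε = -(k : ℤ) - 1) := by
    rw [← pr_or]
    · refine pr_congr n fun ε => ?_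
      have := S_parity n ε
      rw [S_cons, abs_le, abs_le]
      simp only [Bool.false_eq_true, if_false]
      omega
    · intro ε
      rw [S_cons, abs_le]
      simp only [Bool.false_eq_true, if_false]
      omega
  rw [e1, e2]
  ring

lemma P_step (n k : ℕ) (h : n % 2 = (k + 1) % 2) :
    P n (k + 1) = P n (k - 1) + 2 * prEq n (k + 1) := by
  have e : P n (k + 1) = P n (k - 1) + (prEq n (k + 1) + prEq n (-(k + 1))) := by
    unfold P prEq
    rw [← pr_or, ← pr_or]
    · refine pr_congr n fun ε => ?_
      have := S_parity n ε
      rw [abs_le, abs_le]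
      omega
    · intro ε
      rw [abs_le]
      omega
    · intro ε
      omega
  rw [e, prEq_neg]
  ring

lemma P_gain (n k : ℕ) (h : n % 2 = (k + 1) % 2) :
    P (n + 1) k = P n (k - 1) + prEq n (k + 1) := by
  rw [P_succ n k h, P_step n k h]
  ring

lemma P_zero_eq (n : ℕ) : P n 0 = prEq n 0 := by
  unfold P prEq
  exact pr_congr n fun ε => by rw [abs_nonpos_iff]

/-- Two further signs lower `P(|S| ≤ k)` by an explicit multiple of one binomial weight. -/
lemma P_loss (n k : ℕ) (h : n % 2 = k % 2) :
    P (n + 2) k = P n k - (k + 1) / (n + 1) * prEq (n + 1) (k + 1) := by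
  have h1 : P (n + 1) ((k : ℤ) - 1) = P n k - prEq n k := by
    rcases k with _ | k
    · have e : P (n + 1) (((0 : ℕ) : ℤ) - 1) = 0 := by
        have hf : ∀ ε : Fin (n + 1) → Bool, ¬ |S (n + 1) ε| ≤ -1 := fun ε => by
          have := abs_nonneg (S (n + 1) ε)
          omega
        simp [P, pr, hf]
      rw [e]
      simp [P_zero_eq]
    · have a := P_gain n k h
      have b := P_step n k h
      rw [show (((k + 1 : ℕ) : ℤ) - 1) = k by push_cast; ring]
      push_cast
      linarith
  have h2 := P_gain (n + 1) k (by omega)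
  have h3 := prEq_up n k
  push_cast at h3
  rw [h2, h1]
  have hn : (n : ℝ) + 1 ≠ 0 := by positivity
  field_simp
  linarith

lemma P_anti_step (n k : ℕ) (h : n % 2 = k % 2) (hk : k ≤ n) : P (n + 2) k < P n k := by
  rw [P_loss n k h]
  have : 0 < prEq (n + 1) (k + 1) := prEq_pos _ _ (by push_cast; omega) (by
    rw [abs_le]; push_cast; omega)
  have : 0 < ((k : ℝ) + 1) / (n + 1) * prEq (n + 1) (k + 1) := by positivity
  linarith

lemma P_anti (n k r : ℕ) (h : n % 2 = k % 2) (hk : k ≤ n) : P (n + 2 * (r + 1)) k < P n k := by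
  induction r with
  | zero => exact P_anti_step n k h hk
  | succ r ih => exact (P_anti_step (n + 2 * (r + 1)) k (by omega) (by omega)).trans ih

/-! ### Total loss against the gain -/

/-- The losses `b / M` (with `b = k + 1`), summed over every second `M`, are bounded by a logarithm
through `2 / M ≤ log ((M + 1) / (M - 1))`. -/
lemma P_lower (n k r : ℕ) (hk : 1 ≤ k) (h : n % 2 = (k + 1) % 2) (hn : (k + 1) ^ 2 ≤ n + 2) :
    P n (k - 1) + prEq n (k + 1) *
      (1 - ((k : ℝ) + 1) / 2 * Real.log (((n : ℝ) + 1 + 2 * r) / (n + 1))) ≤ P (n + 1 + 2 * r) k := by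
  induction r with
  | zero =>
    have hn1 : (n : ℝ) + 1 ≠ 0 := by positivity
    simp [P_gain n k h, div_self hn1]
  | succ r ih =>
    have hl := P_loss (n + 1 + 2 * r) k (by omega)
    have hq := prEq_anti_iter n (k + 1) (by omega) hn (r + 1)
    rw [show n + 2 * (r + 1) = n + 1 + 2 * r + 1 by ring] at hq
    rw [show n + 1 + 2 * (r + 1) = n + 1 + 2 * r + 2 by ring, hl]
    push_cast at hq ⊢
    have hq0 := prEq_nonneg n (k + 1)
    set x : ℝ := (n : ℝ) + 1 + 2 * r with hx
    have hx0 : 0 < x := by positivity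
    have hlog : Real.log ((x + 2) / (n + 1)) = Real.log (x / (n + 1)) + Real.log (1 + 2 / x) := by
      rw [← Real.log_mul (by positivity) (by positivity)]
      congr 1
      field_simp
    have hb := Real.le_log_one_add_of_nonneg (x := 2 / x) (by positivity)
    have e : 2 * (2 / x) / (2 / x + 2) = 2 / (x + 1) := by
      field_simp
      ring
    rw [e] at hb
    rw [show (n : ℝ) + 1 + 2 * (r + 1) = x + 2 by rw [hx]; ring, hlog]
    have hk0 : (0 : ℝ) ≤ (k : ℝ) + 1 := by positivity
    have s1 : ((k : ℝ) + 1) / (x + 1) * prEq (n + 1 + 2 * r + 1) (k + 1) ≤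
        ((k : ℝ) + 1) / (x + 1) * prEq n (k + 1) :=
      mul_le_mul_of_nonneg_left hq (by positivity)
    have s2 : ((k : ℝ) + 1) / (x + 1) * prEq n (k + 1) ≤
        ((k : ℝ) + 1) / 2 * Real.log (1 + 2 / x) * prEq n (k + 1) := by
      apply mul_le_mul_of_nonneg_right _ hq0
      calc ((k : ℝ) + 1) / (x + 1) = ((k : ℝ) + 1) / 2 * (2 / (x + 1)) := by field_simp
        _ ≤ _ := mul_le_mul_of_nonneg_left hb (by positivity)
    linarith

/-- The crude bound `b log (1 + 1/b) + (b/2) log (A / (A - 1))` for the relative loss exceeds `1` when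
`A` is close to `b²`; there the parities of `N` and `A` force `N ≤ A + 2b + 1`, which suffices. -/
lemma ratio_lt_exp (A b N : ℕ) (hb : 2 ≤ b) (hA : b ^ 2 ≤ A) (hpA : A % 2 = b % 2)
    (hpN : N % 2 = (b + 1) % 2) (hN : b ^ 2 * N < (b + 1) ^ 2 * A) :
    (N : ℝ) / (A - 1) < Real.exp (2 / b) := by
  have hb' : (2 : ℝ) ≤ b := by exact_mod_cast hb
  have hA' : (b : ℝ) ^ 2 ≤ A := by exact_mod_cast hA
  have hb0 : (0 : ℝ) < b := by linarith
  have hA1 : (0 : ℝ) < (A : ℝ) - 1 := by nlinarith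
  have hquad := Real.quadratic_le_exp_of_nonneg (x := 2 / (b : ℝ)) (by positivity)
  have eq2 : 1 + 2 / (b : ℝ) + (2 / (b : ℝ)) ^ 2 / 2 = (b ^ 2 + 2 * b + 2) / b ^ 2 := by
    field_simp
  rw [eq2] at hquad
  rcases Nat.lt_or_ge N (A + 2 * b) with h | h
  · refine lt_of_lt_of_le ?_ hquad
    have h' : (N : ℝ) + 1 ≤ A + 2 * b := by exact_mod_cast h
    rw [div_lt_div_iff₀ hA1 (by positivity)]
    nlinarith [mul_le_mul_of_nonneg_left hA' hb0.le]
  rcases Nat.lt_or_ge N (A + 2 * b + 2) with h2 | h2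
  · have hNe : N = A + 2 * b + 1 := by omega
    have hA2 : b ^ 2 + 2 ≤ A := by
      have hpar : b ^ 2 % 2 = b % 2 := by
        rcases Nat.mod_two_eq_zero_or_one b with h | h <;> simp [Nat.pow_mod, h]
      have hne : A ≠ b ^ 2 := by
        rintro rfl
        subst hNe
        nlinarith
      omega
    refine lt_of_lt_of_le ?_ hquad
    have hA2' : (b : ℝ) ^ 2 + 2 ≤ A := by exact_mod_cast hA2
    rw [div_lt_div_iff₀ hA1 (by positivity), hNe]
    push_cast
    nlinarith [mul_le_mul_of_nonneg_left hA2' hb0.le]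
  · have h3 : A + 2 * b + 3 ≤ N := by omega
    have hA3 : b ^ 2 + b ≤ A := by
      by_contra hlt
      have hlt' : A + 1 ≤ b ^ 2 + b := by omega
      have := Nat.mul_le_mul_left (b ^ 2) h3
      nlinarith
    have hA3' : (b : ℝ) ^ 2 + b ≤ A := by exact_mod_cast hA3
    have hN' : (b : ℝ) ^ 2 * N < (b + 1) ^ 2 * A := by exact_mod_cast hN
    have hc : (0 : ℝ) < (b : ℝ) ^ 2 + b - 1 := by nlinarith
    have st1 : (N : ℝ) / (A - 1) < (b + 1) ^ 3 / (b * (b ^ 2 + b - 1)) := by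
      calc (N : ℝ) / (A - 1) < ((b + 1) ^ 2 * A / b ^ 2) / (A - 1) := by
            apply div_lt_div_of_pos_right _ hA1
            rw [lt_div_iff₀ (by positivity)]
            linarith
        _ ≤ (b + 1) ^ 3 / (b * (b ^ 2 + b - 1)) := by
            rw [div_div, div_le_div_iff₀ (by positivity) (by positivity)]
            have : 0 ≤ (b : ℝ) * (b + 1) ^ 2 * ((A : ℝ) - (b ^ 2 + b)) :=
              mul_nonneg (by positivity) (by linarith)
            nlinarith
    refine st1.trans_le ?_
    -- The fourth Taylor polynomial is the first one large enough for `b = 2`.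
    have hexp := Real.sum_le_exp_of_nonneg (x := 2 / (b : ℝ)) (by positivity) 5
    refine le_trans ?_ hexp
    have eq5 : ∑ i ∈ Finset.range 5, (2 / (b : ℝ)) ^ i / (i.factorial : ℝ) =
        (3 * b ^ 4 + 6 * b ^ 3 + 6 * b ^ 2 + 4 * b + 2) / (3 * b ^ 4) := by
      simp [Finset.sum_range_succ, Nat.factorial]
      field_simp
      ring
    rw [eq5, div_le_div_iff₀ (by positivity) (by positivity)]
    have : 0 ≤ (b : ℝ) * (b ^ 3 - 2 * b - 2) :=
      mul_nonneg hb0.le (by nlinarith [sq_nonneg ((b : ℝ) - 2)])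
    nlinarith

lemma P_main (n k r : ℕ) (hk : 1 ≤ k) (h : n % 2 = (k + 1) % 2) (hn : (k + 1) ^ 2 ≤ n + 2)
    (hN : (k + 1) ^ 2 * (n + 1 + 2 * r) < (k + 2) ^ 2 * (n + 2)) :
    P n (k - 1) < P (n + 1 + 2 * r) k := by
  refine lt_of_lt_of_le ?_ (P_lower n k r hk h hn)
  have hq : 0 < prEq n (k + 1) := prEq_pos _ _ (by omega) (by
    rw [abs_le]
    have : k + 1 ≤ n := by nlinarith
    omega)
  have hx := ratio_lt_exp (n + 2) (k + 1) (n + 1 + 2 * r) (by omega) hn (by omega) (by omega) hN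
  push_cast at hx
  rw [show (n : ℝ) + 2 - 1 = n + 1 by ring] at hx
  have hlog := (Real.log_lt_iff_lt_exp (by positivity)).2 hx
  have hk0 : (0 : ℝ) < (k : ℝ) + 1 := by positivity
  rw [lt_div_iff₀ hk0] at hlog
  have : 0 < 1 - ((k : ℝ) + 1) / 2 * Real.log (((n : ℝ) + 1 + 2 * r) / (n + 1)) := by linarith
  have := mul_pos hq this
  linarith

lemma P_parity (n k : ℕ) (h : n % 2 = (k + 1) % 2) : P n k = P n (k - 1) := by
  unfold P
  refine pr_congr n fun ε => ?_
  have := S_parity n ε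
  rw [abs_le, abs_le]
  omega

/-! ### The chain of inequalities -/

/-- for an increasing integer sequence `(mₖ)` (`k ≥ 1`) with `m₁ ≥ 0`,
`mₖ + k` odd, `mₖ + 1 ≥ k²` and `mₖ₊₁ − 1 < ((k+1)²/k²)(mₖ+1)`, one has the chain
`P(S_{m₂−1} = 0) = P_{m₂−1}(0) < P_{m₃−1}(1) < ⋯ < P_{mₖ₊₁−1}(k−1) < P_m(k)`
for `mₖ ≤ m < mₖ₊₁ − 1`; in particular `k ↦ P_{mₖ₊₁−1}(k−1)` is strictly increasing. -/
theorem stmt_15 (m : ℕ → ℤ)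
    (hmono : ∀ k : ℕ, 1 ≤ k → m k < m (k + 1))
    (h1 : 0 ≤ m 1)
    (hodd : ∀ k : ℕ, 1 ≤ k → Odd (m k + k))
    (hsq : ∀ k : ℕ, 1 ≤ k → (k : ℤ) ^ 2 ≤ m k + 1)
    (hgap : ∀ k : ℕ, 1 ≤ k →
      ((m (k + 1) : ℝ) - 1) < (((k : ℝ) + 1) ^ 2 / (k : ℝ) ^ 2) * ((m k : ℝ) + 1)) :
    prEq (m 2 - 1).toNat 0 = P (m 2 - 1).toNat 0 ∧
    (∀ j : ℕ, 1 ≤ j →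
      P (m (j + 1) - 1).toNat ((j : ℤ) - 1) < P (m (j + 2) - 1).toNat (j : ℤ)) ∧
    (∀ k : ℕ, 1 ≤ k → ∀ mm : ℤ, m k ≤ mm → mm < m (k + 1) - 1 →
      P (m (k + 1) - 1).toNat ((k : ℤ) - 1) < P mm.toNat (k : ℤ)) := by
  refine ⟨(P_zero_eq _).symm, ?_, ?_⟩
  · intro j hj
    have a := hmono (j + 1) (by omega)
    have o1 := hodd (j + 1) (by omega)
    have o2 := hodd (j + 2) (by omega)
    have s := hsq (j + 1) (by omega)
    have g := hgap (j + 1) (by omega)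
    rw [show j + 1 + 1 = j + 2 by ring] at a g
    rw [Int.odd_iff] at o1 o2
    push_cast at o1 o2 s g
    have hj' : (1 : ℤ) ≤ j := by exact_mod_cast hj
    have hpos : 0 ≤ m (j + 1) - 1 := by nlinarith
    obtain ⟨n, hn⟩ := Int.eq_ofNat_of_zero_le hpos
    obtain ⟨r, hr⟩ := Int.eq_ofNat_of_zero_le (show 0 ≤ (m (j + 2) - 1 - (n + 1)) / 2 by omega)
    have e2 : m (j + 2) - 1 = ((n + 1 + 2 * r : ℕ) : ℤ) := by push_cast; omega
    rw [hn, e2, Int.toNat_natCast, Int.toNat_natCast]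
    apply P_main n j r hj (by omega)
    · zify
      linarith
    · have e2' : (m (j + 2) : ℝ) - 1 = (n : ℝ) + 1 + 2 * r := by exact_mod_cast e2
      have hn' : (m (j + 1) : ℝ) - 1 = (n : ℝ) := by exact_mod_cast hn
      rw [e2', show (m (j + 1) : ℝ) + 1 = n + 2 by linarith, div_mul_eq_mul_div,
        lt_div_iff₀ (by positivity)] at g
      rw [show (j : ℝ) + 1 + 1 = j + 2 by ring] at g
      have g' : ((j : ℝ) + 1) ^ 2 * (n + 1 + 2 * r) < (j + 2) ^ 2 * (n + 2) := by linarith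
      exact_mod_cast g'
  · intro k hk mm h2 h3
    have o1 := hodd k hk
    have o2 := hodd (k + 1) (by omega)
    have s := hsq k hk
    rw [Int.odd_iff] at o1 o2
    push_cast at o2
    have hk' : (1 : ℤ) ≤ k := by exact_mod_cast hk
    have hmk : (k : ℤ) - 1 ≤ m k := by nlinarith
    obtain ⟨i, rfl⟩ : ∃ i, k = i + 1 := ⟨k - 1, by omega⟩
    push_cast at o1 o2 hmk
    obtain ⟨n, rfl⟩ := Int.eq_ofNat_of_zero_le (show 0 ≤ mm by omega)
    obtain ⟨N, hN⟩ := Int.eq_ofNat_of_zero_le (show 0 ≤ m (i + 1 + 1) - 1 by omega)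
    rw [hN, Int.toNat_natCast, Int.toNat_natCast]
    have ei : (((i + 1 : ℕ) : ℤ) - 1) = (i : ℤ) := by push_cast; ring
    rcases Nat.mod_two_eq_zero_or_one (n + i) with hp | hp
    · rw [P_parity n (i + 1) (by omega), ei]
      obtain ⟨r, hr⟩ : ∃ r, N = n + 2 * (r + 1) := ⟨(N - n) / 2 - 1, by omega⟩
      rw [hr]
      exact P_anti n i r (by omega) (by omega)
    · -- Here `mm` and `m k` have opposite parity, so `mm - 1 ≥ m k`.
      obtain ⟨n, rfl⟩ : ∃ n', n = n' + 1 := ⟨n - 1, by omega⟩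
      have hg := P_gain n (i + 1) (by omega)
      rw [hg, ei]
      obtain ⟨r, hr⟩ : ∃ r, N = n + 2 * (r + 1) := ⟨(N - n) / 2 - 1, by omega⟩
      rw [hr]
      have := P_anti n i r (by omega) (by omega)
      have := prEq_nonneg n (((i + 1 : ℕ) : ℤ) + 1)
      linarith
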